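/- Let n be a positive integer, D a symmetric n×n real matrix, and μ a real number. Suppose q, p, w : ℝ → ℝⁿ are differentiable and satisfy for all t the lifted FOM of the parametrized Klein-Gordon equation: q′ = p, p′ = Dq − μ (w ⊙ q), w′ = 2 (q ⊙ p). Then the lifted energy t ↦ ½ p(t)ᵀp(t) − ½ q(t)ᵀD q(t) + (μ/4) w(t)ᵀw(t) is constant in t. -/

import Mathlib

open Matrix BigOperators

/-!
The derivative of the energy is `pᵀp' - ½(pᵀDq + qᵀDp) + (μ/2) wᵀw'`. Symmetry of `D` turns the
middle term into `pᵀDq`, and after substituting the equations of motion what remains is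
`-μ pᵀ(w ⊙ q) + μ wᵀ(q ⊙ p)`, which vanishes because both products are `∑ᵢ wᵢ qᵢ pᵢ`.
A function on `ℝ` with zero derivative everywhere is constant.
-/

theorem hasDerivAt_dotProduct {n : ℕ} {u v : ℝ → Fin n → ℝ} {u' v' : Fin n → ℝ} {t : ℝ}
    (hu : HasDerivAt u u' t) (hv : HasDerivAt v v' t) :
    HasDerivAt (fun s => u s ⬝ᵥ v s) (u' ⬝ᵥ v t + u t ⬝ᵥ v') t := by
  rw [hasDerivAt_pi] at hu hv
  simp only [dotProduct, ← Finset.sum_add_distrib]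
  exact HasDerivAt.fun_sum fun i _ => (hu i).mul (hv i)

theorem hasDerivAt_mulVec {n : ℕ} (D : Matrix (Fin n) (Fin n) ℝ) {u : ℝ → Fin n → ℝ}
    {u' : Fin n → ℝ} {t : ℝ} (hu : HasDerivAt u u' t) :
    HasDerivAt (fun s => D.mulVec (u s)) (D.mulVec u') t := by
  rw [hasDerivAt_pi] at hu ⊢
  intro i
  simp only [mulVec, dotProduct]
  exact HasDerivAt.fun_sum fun j _ => (hu j).const_mul (D i j)

/-- Energy conservation of the lifted FOM of the parametrized Klein-Gordon equation. -/
theorem klein_gordon_lifted_fom_conserves_energy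
    (n : ℕ) (hn : 0 < n)
    (D : Matrix (Fin n) (Fin n) ℝ) (hD : D.IsSymm)
    (μ : ℝ)
    (q p w : ℝ → Fin n → ℝ)
    (hq : ∀ t, HasDerivAt q (p t) t)
    (hp : ∀ t, HasDerivAt p (D.mulVec (q t) - μ • fun i => w t i * q t i) t)
    (hw : ∀ t, HasDerivAt w ((2 : ℝ) • fun i => q t i * p t i) t) :
    ∀ s t : ℝ,
      (1 / 2) * (p s ⬝ᵥ p s) - (1 / 2) * (q s ⬝ᵥ D.mulVec (q s)) + (μ / 4) * (w s ⬝ᵥ w s)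
      = (1 / 2) * (p t ⬝ᵥ p t) - (1 / 2) * (q t ⬝ᵥ D.mulVec (q t))
        + (μ / 4) * (w t ⬝ᵥ w t) := by
  have hE : ∀ t, HasDerivAt (fun s => (1 / 2) * (p s ⬝ᵥ p s)
      - (1 / 2) * (q s ⬝ᵥ D.mulVec (q s)) + (μ / 4) * (w s ⬝ᵥ w s)) 0 t := by
    intro t
    have h := (((hasDerivAt_dotProduct (hp t) (hp t)).const_mul (1 / 2 : ℝ)).sub
      ((hasDerivAt_dotProduct (hq t) (hasDerivAt_mulVec D (hq t))).const_mul (1 / 2 : ℝ))).add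
      ((hasDerivAt_dotProduct (hw t) (hw t)).const_mul (μ / 4))
    refine h.congr_deriv ?_
    have hsymm : q t ⬝ᵥ D.mulVec (p t) = p t ⬝ᵥ D.mulVec (q t) := by
      rw [dotProduct_mulVec, ← mulVec_transpose, hD.eq, dotProduct_comm]
    have hcubic : p t ⬝ᵥ (fun i => w t i * q t i) = w t ⬝ᵥ fun i => q t i * p t i := by
      simp only [dotProduct]
      exact Finset.sum_congr rfl fun i _ => by ring
    rw [dotProduct_comm _ (p t), dotProduct_comm _ (w t), hsymm]
    simp only [dotProduct_sub, dotProduct_smul, smul_eq_mul, hcubic]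
    ring
  exact is_const_of_deriv_eq_zero (fun t => (hE t).differentiableAt) fun t => (hE t).deriv
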